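/- Let F be a field of characteristic p > 2 and A = F[t, t⁻¹] the algebra of Laurent polynomials over F, equipped with the trilinear bracket [·,·,·]_{ω_1,δ} determined on monomials by [t^l, t^m, t^n]_{ω_1,δ} = (n−m)·t^{m+n−l} + (l−n)·t^{n+l−m} + (m−l)·t^{l+m−n}. For every nonzero integer k, the subspaces I_k = {(t^{kp} + t^{−kp})·h(t) : h(t) ∈ A} and J_k = {(t^{kp} − t^{−kp})·h(t) : h(t) ∈ A} are nonzero proper ideals of the 3-Lie algebra (A, [·,·,·]_{ω_1,δ}); i.e., I_k ≠ 0, I_k ≠ A, J_k ≠ 0, J_k ≠ A, and [x,y,z]_{ω_1,δ} ∈ I_k (resp. J_k) whenever x ∈ I_k (resp. x ∈ J_k) and y, z ∈ A. -/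

import Mathlib

open LaurentPolynomial

/-!
The bracket is the determinant with rows `(ω x, ω y, ω z)`, `(x, y, z)`, `(δ x, δ y, δ z)`, where
`ω` is the involution `t ↦ t⁻¹` and `δ = t d/dt`. If `g` divides both `ω g` and `δ g`, then `ω` and
`δ` preserve the ideal `(g)`; for `x ∈ (g)` the whole first column of the determinant is therefore
divisible by `g`. For `g = t^q + ε t^{-q}` with `ε² = 1` we have `ω g = ε g`, and `δ g = 0` as soon
as `q = 0` in the base ring. The ideal is proper because a polynomial that becomes a unit after
inverting `t` divides a power of `t`; if its constant term is a unit, it is coprime to `t` and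
hence already a unit, which a monic polynomial of positive degree such as `t^n + u` is not.
-/

section DetBracket

theorem dvd_det_of_dvd_col {n A : Type*} [Fintype n] [DecidableEq n] [CommRing A]
    {M : Matrix n n A} {g : A} (j : n) (h : ∀ i, g ∣ M i j) : g ∣ M.det := by
  rw [Matrix.det_apply]
  exact Finset.dvd_sum fun σ _ ↦ dvd_smul_of_dvd _ <|
    (h (σ j)).trans (Finset.dvd_prod_of_mem (fun i ↦ M (σ i) i) (Finset.mem_univ j))

theorem det_fin_three_of {A : Type*} [CommRing A] (a b c d e f g h i : A) :
    !![a, b, c; d, e, f; g, h, i].det =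
      a * e * i - a * f * h - b * d * i + b * f * g + c * d * h - c * e * g :=
  Matrix.det_fin_three _

theorem dvd_derivation_apply {k A : Type*} [CommSemiring k] [CommSemiring A] [Algebra k A]
    {D : Derivation k A A} {g x : A} (hD : g ∣ D g) (hx : g ∣ x) : g ∣ D x := by
  obtain ⟨h, rfl⟩ := hx
  rw [D.leibniz]
  exact dvd_add (dvd_mul_right g (D h)) (hD.mul_left h)

variable {k A : Type*} [CommSemiring k] [CommRing A] [Algebra k A]

/-- The ternary bracket `[x, y, z]_{ω, δ}` attached to two linear endomorphisms `ω` and `δ` of a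
commutative algebra: the determinant whose columns are `(ω v, v, δ v)` for `v = x, y, z`. It is a
curried trilinear map, so that it can be compared with another one on a basis. -/
def detBracket (ω δ : A →ₗ[k] A) : A →ₗ[k] A →ₗ[k] A →ₗ[k] A :=
  LinearMap.mk₂ k
    (fun x y ↦
      { toFun := fun z ↦ !![ω x, ω y, ω z; x, y, z; δ x, δ y, δ z].det
        map_add' := by intros; simp only [det_fin_three_of, map_add]; ring
        map_smul' := by
          intros
          simp only [det_fin_three_of, map_smul, mul_smul_comm, smul_mul_assoc, smul_add, smul_sub,
            RingHom.id_apply] })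
    (by
      intros; ext
      simp only [det_fin_three_of, map_add, LinearMap.coe_mk, AddHom.coe_mk, LinearMap.add_apply]
      ring)
    (by
      intros; ext
      simp only [det_fin_three_of, map_smul, mul_smul_comm, smul_mul_assoc, smul_add, smul_sub,
        LinearMap.coe_mk, AddHom.coe_mk, LinearMap.smul_apply])
    (by
      intros; ext
      simp only [det_fin_three_of, map_add, LinearMap.coe_mk, AddHom.coe_mk, LinearMap.add_apply]
      ring)
    (by
      intros; ext
      simp only [det_fin_three_of, map_smul, mul_smul_comm, smul_mul_assoc, smul_add, smul_sub,
        LinearMap.coe_mk, AddHom.coe_mk, LinearMap.smul_apply])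

theorem detBracket_apply (ω δ : A →ₗ[k] A) (x y z : A) :
    detBracket ω δ x y z = !![ω x, ω y, ω z; x, y, z; δ x, δ y, δ z].det :=
  rfl

theorem dvd_detBracket {ω : A →ₐ[k] A} {D : Derivation k A A} {g x : A} (hω : g ∣ ω g)
    (hD : g ∣ D g) (hx : g ∣ x) (y z : A) :
    g ∣ detBracket ω.toLinearMap D x y z := by
  rw [detBracket_apply]
  refine dvd_det_of_dvd_col 0 fun i ↦ ?_
  fin_cases i
  exacts [hω.trans (map_dvd ω hx), hx, dvd_derivation_apply hD hx]

end DetBracket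

section RangeMulLeft

variable {k A : Type*} [CommSemiring k] [CommSemiring A] [Algebra k A] {g x : A}

theorem mem_range_mulLeft_iff_dvd : x ∈ LinearMap.range (LinearMap.mulLeft k g) ↔ g ∣ x :=
  exists_congr fun _ ↦ eq_comm

theorem range_mulLeft_eq_bot_iff : LinearMap.range (LinearMap.mulLeft k g) = ⊥ ↔ g = 0 := by
  rw [LinearMap.range_eq_bot, LinearMap.mulLeft_eq_zero_iff]

theorem range_mulLeft_eq_top_iff : LinearMap.range (LinearMap.mulLeft k g) = ⊤ ↔ IsUnit g := by
  rw [Submodule.eq_top_iff', isUnit_iff_forall_dvd]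
  simp only [mem_range_mulLeft_iff_dvd]

end RangeMulLeft

theorem T_add_smul_T_ne_zero {R : Type*} [Semiring R] [Nontrivial R] {a b : ℤ}
    (hab : a ≠ b) (r : R) : (T a + r • T b : R[T;T⁻¹]) ≠ 0 := by
  intro h
  simpa [hab.symm] using congrArg (fun x : R[T;T⁻¹] ↦ x.coeff a) h

section Units

variable {R : Type*} [CommRing R]

theorem isCoprime_X_of_isUnit_coeff_zero {P : Polynomial R} (h : IsUnit (P.coeff 0)) :
    IsCoprime P Polynomial.X := by
  obtain ⟨u, hu⟩ := h.exists_left_inv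
  have hCu : Polynomial.C u * Polynomial.C (P.coeff 0) = 1 := by rw [← map_mul, hu, map_one]
  refine ⟨Polynomial.C u, -(Polynomial.C u * P.divX), ?_⟩
  linear_combination hCu - Polynomial.C u * P.divX_mul_X_add

theorem isUnit_of_isUnit_toLaurent {P : Polynomial R} (h₀ : IsUnit (P.coeff 0))
    (hP : IsUnit P.toLaurent) : IsUnit P := by
  rw [← algebraMap_eq_toLaurent,
    IsLocalization.Away.algebraMap_isUnit_iff (Polynomial.X : Polynomial R)] at hP
  obtain ⟨n, hn⟩ := hP
  exact (isCoprime_X_of_isUnit_coeff_zero h₀).pow_right.isUnit_of_dvd hn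

variable [Nontrivial R]

theorem not_isUnit_T_natCast_add_C {n : ℕ} (hn : n ≠ 0) {u : R} (hu : IsUnit u) :
    ¬ IsUnit (T n + C u : R[T;T⁻¹]) := by
  intro h
  have hmonic : (Polynomial.X ^ n + Polynomial.C u).Monic := Polynomial.monic_X_pow_add_C u hn
  have hunit : IsUnit (Polynomial.X ^ n + Polynomial.C u) :=
    isUnit_of_isUnit_toLaurent (by simpa [hn.symm] using hu) (by simpa using h)
  have hdeg := congrArg Polynomial.natDegree (hmonic.eq_one_of_isUnit hunit)
  rw [Polynomial.natDegree_X_pow_add_C, Polynomial.natDegree_one] at hdeg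
  exact hn hdeg

theorem not_isUnit_T_add_smul_T {a b : ℤ} (hab : a ≠ b) (u : Rˣ) :
    ¬ IsUnit (T a + (u : R) • T b : R[T;T⁻¹]) := by
  wlog hlt : b < a generalizing a b u
  · have hfactor : (T a + (u : R) • T b : R[T;T⁻¹]) = u • (T b + (↑u⁻¹ : R) • T a) := by
      rw [Units.smul_def, smul_add, smul_smul, Units.mul_inv, one_smul, add_comm]
    rw [hfactor, isUnit_smul_iff]
    exact this hab.symm u⁻¹ (by omega)
  obtain ⟨n, rfl⟩ : ∃ n : ℕ, a = n + b := ⟨(a - b).toNat, by omega⟩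
  rw [T_add, smul_eq_C_mul, ← add_mul, (isUnit_T b).mul_right_iff]
  exact not_isUnit_T_natCast_add_C (by omega) u.isUnit

end Units

theorem linearMap_ext_T {R M : Type*} [Semiring R] [AddCommMonoid M] [Module R M]
    {f g : R[T;T⁻¹] →ₗ[R] M} (h : ∀ n : ℤ, f (T n) = g (T n)) : f = g :=
  (AddMonoidAlgebra.basis ℤ R).ext h

section EulerDerivation

variable {R : Type*} [CommRing R]

/-- The linear map underlying `eulerDerivation`. -/
noncomputable def eulerLinearMap : R[T;T⁻¹] →ₗ[R] R[T;T⁻¹] :=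
  (AddMonoidAlgebra.basis ℤ R).constr R fun n ↦ (n : R) • T n

theorem eulerLinearMap_T (n : ℤ) : eulerLinearMap (T n : R[T;T⁻¹]) = (n : R) • T n :=
  (AddMonoidAlgebra.basis ℤ R).constr_basis R _ n

theorem eulerLinearMap_mul (x y : R[T;T⁻¹]) :
    eulerLinearMap (x * y) = x * eulerLinearMap y + y * eulerLinearMap x := by
  let μ := LinearMap.mul R R[T;T⁻¹]
  have hμ : μ.compr₂ eulerLinearMap =
      μ.compl₂ eulerLinearMap + (μ.compl₂ eulerLinearMap).flip := by
    refine linearMap_ext_T fun m ↦ linearMap_ext_T fun n ↦ ?_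
    simp only [μ, LinearMap.compr₂_apply, LinearMap.compl₂_apply, LinearMap.add_apply,
      LinearMap.flip_apply, LinearMap.mul_apply_apply, eulerLinearMap_T, mul_smul_comm, ← T_add,
      Int.cast_add, add_smul]
    rw [add_comm n m, add_comm]
  exact LinearMap.congr_fun₂ hμ x y

/-- The derivation `δ = t d/dt` of the Laurent polynomials, given by `δ(t^n) = n t^n`. -/
noncomputable def eulerDerivation : Derivation R R[T;T⁻¹] R[T;T⁻¹] :=
  Derivation.mk' eulerLinearMap eulerLinearMap_mul

theorem eulerDerivation_T (n : ℤ) : eulerDerivation (T n : R[T;T⁻¹]) = (n : R) • T n :=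
  eulerLinearMap_T n

theorem eq_detBracket_invert_eulerDerivation
    {f : R[T;T⁻¹] →ₗ[R] R[T;T⁻¹] →ₗ[R] R[T;T⁻¹] →ₗ[R] R[T;T⁻¹]}
    (hf : ∀ l m n : ℤ, f (T l) (T m) (T n) =
      ((n : R) - (m : R)) • T (m + n - l) + ((l : R) - (n : R)) • T (n + l - m) +
        ((m : R) - (l : R)) • T (l + m - n)) :
    f = detBracket (invert (R := R)).toAlgHom.toLinearMap
      (eulerDerivation : Derivation R R[T;T⁻¹] R[T;T⁻¹]) := by
  refine linearMap_ext_T fun l ↦ linearMap_ext_T fun m ↦ linearMap_ext_T fun n ↦ ?_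
  rw [hf, detBracket_apply, det_fin_three_of]
  simp only [AlgEquiv.toAlgHom_toLinearMap, AlgEquiv.toLinearMap_apply, invert_T,
    Derivation.coeFn_coe, eulerDerivation_T, smul_eq_C_mul, T_add, T_sub, map_sub]
  ring

variable {q : ℤ} {ε : R}

theorem invert_T_add_smul_T_neg (hε : ε * ε = 1) :
    invert (T q + ε • T (-q) : R[T;T⁻¹]) = ε • (T q + ε • T (-q)) := by
  rw [map_add, map_smul, invert_T, invert_T, neg_neg, smul_add, smul_smul, hε, one_smul, add_comm]

theorem eulerDerivation_T_add_smul_T_neg (hq : (q : R) = 0) :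
    eulerDerivation (T q + ε • T (-q) : R[T;T⁻¹]) = 0 := by
  simp [eulerDerivation_T, hq]

end EulerDerivation

theorem stmt_16_general {R : Type*} [CommRing R] [Nontrivial R]
    {f : R[T;T⁻¹] →ₗ[R] R[T;T⁻¹] →ₗ[R] R[T;T⁻¹] →ₗ[R] R[T;T⁻¹]}
    (hf : ∀ l m n : ℤ, f (T l) (T m) (T n) =
      ((n : R) - (m : R)) • T (m + n - l) + ((l : R) - (n : R)) • T (n + l - m) +
        ((m : R) - (l : R)) • T (l + m - n))
    {q : ℤ} (hq : q ≠ 0) (hqR : (q : R) = 0) {ε : R} (hε : ε * ε = 1) :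
    LinearMap.range (LinearMap.mulLeft R (T q + ε • T (-q) : R[T;T⁻¹])) ≠ ⊥ ∧
    LinearMap.range (LinearMap.mulLeft R (T q + ε • T (-q) : R[T;T⁻¹])) ≠ ⊤ ∧
    ∀ x ∈ LinearMap.range (LinearMap.mulLeft R (T q + ε • T (-q) : R[T;T⁻¹])), ∀ y z,
      f x y z ∈ LinearMap.range (LinearMap.mulLeft R (T q + ε • T (-q) : R[T;T⁻¹])) := by
  have hne : q ≠ -q := by omega
  refine ⟨?_, ?_, fun x hx y z ↦ ?_⟩
  · rw [Ne, range_mulLeft_eq_bot_iff]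
    exact T_add_smul_T_ne_zero hne ε
  · rw [Ne, range_mulLeft_eq_top_iff]
    exact not_isUnit_T_add_smul_T hne ⟨ε, ε, hε, hε⟩
  · rw [mem_range_mulLeft_iff_dvd] at hx ⊢
    rw [eq_detBracket_invert_eulerDerivation hf]
    refine dvd_detBracket (Dvd.intro (C ε) ?_) ?_ hx y z
    · rw [mul_comm, ← smul_eq_C_mul]
      exact (invert_T_add_smul_T_neg hε).symm
    · rw [eulerDerivation_T_add_smul_T_neg hqR]
      exact dvd_zero _

/-- For char F = p > 2 and every nonzero integer `k`, the subspaces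
`I_k = (t^{kp} + t^{−kp})·A` and `J_k = (t^{kp} − t^{−kp})·A` are nonzero proper ideals
of the 3-Lie algebra `(A, [·,·,·]_{ω_1,δ})` on `A = F[t,t⁻¹]`. -/
theorem stmt_16 (F : Type*) [Field F] (p : ℕ) [CharP F p] (hp : 2 < p)
    (f : LaurentPolynomial F →ₗ[F] LaurentPolynomial F →ₗ[F] LaurentPolynomial F →ₗ[F]
      LaurentPolynomial F)
    (hf : ∀ l m n : ℤ, f (T l) (T m) (T n) =
      ((n : F) - (m : F)) • (T (m + n - l) : LaurentPolynomial F) +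
      ((l : F) - (n : F)) • (T (n + l - m) : LaurentPolynomial F) +
      ((m : F) - (l : F)) • (T (l + m - n) : LaurentPolynomial F))
    (k : ℤ) (hk : k ≠ 0) :
    (LinearMap.range (LinearMap.mulLeft F
        ((T (k * p) + T (-(k * p))) : LaurentPolynomial F)) ≠ ⊥) ∧
    (LinearMap.range (LinearMap.mulLeft F
        ((T (k * p) + T (-(k * p))) : LaurentPolynomial F)) ≠ ⊤) ∧
    (∀ x ∈ LinearMap.range (LinearMap.mulLeft F
        ((T (k * p) + T (-(k * p))) : LaurentPolynomial F)),
      ∀ y z : LaurentPolynomial F,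
        f x y z ∈ LinearMap.range (LinearMap.mulLeft F
          ((T (k * p) + T (-(k * p))) : LaurentPolynomial F))) ∧
    (LinearMap.range (LinearMap.mulLeft F
        ((T (k * p) - T (-(k * p))) : LaurentPolynomial F)) ≠ ⊥) ∧
    (LinearMap.range (LinearMap.mulLeft F
        ((T (k * p) - T (-(k * p))) : LaurentPolynomial F)) ≠ ⊤) ∧
    (∀ x ∈ LinearMap.range (LinearMap.mulLeft F
        ((T (k * p) - T (-(k * p))) : LaurentPolynomial F)),
      ∀ y z : LaurentPolynomial F,
        f x y z ∈ LinearMap.range (LinearMap.mulLeft F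
          ((T (k * p) - T (-(k * p))) : LaurentPolynomial F))) := by
  have hq : k * (p : ℤ) ≠ 0 := mul_ne_zero hk (by omega)
  have hqF : ((k * p : ℤ) : F) = 0 := by simp
  have hI := stmt_16_general hf hq hqF (mul_one 1)
  have hJ := stmt_16_general hf hq hqF (ε := -1) (by ring)
  rw [one_smul] at hI
  rw [neg_one_smul, ← sub_eq_add_neg] at hJ
  exact ⟨hI.1, hI.2.1, hI.2.2, hJ⟩
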